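/- A finitely presented left P_k(Ē)-module M of finite length satisfies L_k(E) ⊗_{P_k(Ē)} M = 0 if and only if all composition factors of M are isomorphic to modules in the set {coker(ν_i) : i ∈ E^0 not a sink}. That is, the category M of finitely presented P_k(Ē)-modules killed by L_k(E) ⊗_{P_k(Ē)} − is exactly the full subcategory of finite-length finitely presented P_k(Ē)-modules all of whose composition factors lie in {coker(ν_i) : i ∈ E^0 \ Sink(E)}. -/

import Mathlib

namespace LPA

/-- A finite quiver: finite sets of vertices and arrows with source and target maps. -/
structure FinQuiver : Type 1 where
  V : Type
  A : Type
  [fintypeV : Fintype V]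
  [decEqV : DecidableEq V]
  [fintypeA : Fintype A]
  [decEqA : DecidableEq A]
  src : A → V
  tgt : A → V

attribute [instance] FinQuiver.fintypeV FinQuiver.decEqV FinQuiver.fintypeA FinQuiver.decEqA

/-- The inverse quiver: all arrows reversed. -/
def FinQuiver.rev (Q : FinQuiver) : FinQuiver where
  V := Q.V
  A := Q.A
  fintypeV := Q.fintypeV
  decEqV := Q.decEqV
  fintypeA := Q.fintypeA
  decEqA := Q.decEqA
  src := Q.tgt
  tgt := Q.src

/-- Generators of the path algebra: a trivial path `p v` for each vertex and an arrow `e` for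
each arrow. -/
inductive PathGen (Q : FinQuiver) : Type
  | vertex (v : Q.V) : PathGen Q
  | edge (e : Q.A) : PathGen Q

/-- Defining relations of the path algebra: the trivial paths are pairwise orthogonal
idempotents summing to `1`, and `p (src e) * e = e = e * p (tgt e)`. -/
inductive PathRel (k : Type) [CommRing k] (Q : FinQuiver) :
    FreeAlgebra k (PathGen Q) → FreeAlgebra k (PathGen Q) → Prop
  | vertex_mul_self (v : Q.V) :
      PathRel k Q (FreeAlgebra.ι k (PathGen.vertex v) * FreeAlgebra.ι k (PathGen.vertex v))
        (FreeAlgebra.ι k (PathGen.vertex v))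
  | vertex_mul_ne (v w : Q.V) (h : v ≠ w) :
      PathRel k Q (FreeAlgebra.ι k (PathGen.vertex v) * FreeAlgebra.ι k (PathGen.vertex w)) 0
  | sum_vertex :
      PathRel k Q (∑ v : Q.V, FreeAlgebra.ι k (PathGen.vertex v)) 1
  | src_mul (e : Q.A) :
      PathRel k Q
        (FreeAlgebra.ι k (PathGen.vertex (Q.src e)) * FreeAlgebra.ι k (PathGen.edge e))
        (FreeAlgebra.ι k (PathGen.edge e))
  | mul_tgt (e : Q.A) :
      PathRel k Q
        (FreeAlgebra.ι k (PathGen.edge e) * FreeAlgebra.ι k (PathGen.vertex (Q.tgt e)))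
        (FreeAlgebra.ι k (PathGen.edge e))

/-- The path algebra `P_k(Q)` of a finite quiver `Q`, presented by generators and relations. -/
def PathAlg (k : Type) [CommRing k] (Q : FinQuiver) : Type :=
  RingQuot (PathRel k Q)

variable (k : Type) [CommRing k] (Q : FinQuiver)

noncomputable instance : Ring (PathAlg k Q) :=
  inferInstanceAs (Ring (RingQuot (PathRel k Q)))

noncomputable instance : Algebra k (PathAlg k Q) :=
  inferInstanceAs (Algebra k (RingQuot (PathRel k Q)))

/-- The quotient map from the free algebra onto the path algebra. -/
noncomputable def PathAlg.mk : FreeAlgebra k (PathGen Q) →ₐ[k] PathAlg k Q :=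
  RingQuot.mkAlgHom k (PathRel k Q)

/-- The trivial path (vertex idempotent) `p v` in the path algebra. -/
noncomputable def PathAlg.p (v : Q.V) : PathAlg k Q :=
  PathAlg.mk k Q (FreeAlgebra.ι k (PathGen.vertex v))

/-- The arrow `e` in the path algebra. -/
noncomputable def PathAlg.arrow (e : Q.A) : PathAlg k Q :=
  PathAlg.mk k Q (FreeAlgebra.ι k (PathGen.edge e))

theorem PathAlg.mk_rel {x y : FreeAlgebra k (PathGen Q)} (h : PathRel k Q x y) :
    PathAlg.mk k Q x = PathAlg.mk k Q y :=
  RingQuot.mkAlgHom_rel k h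

theorem PathAlg.p_mul_self (v : Q.V) : PathAlg.p k Q v * PathAlg.p k Q v = PathAlg.p k Q v := by
  have h := PathAlg.mk_rel k Q (PathRel.vertex_mul_self v)
  simpa [map_mul, PathAlg.p] using h

theorem PathAlg.p_mul_ne (v w : Q.V) (hvw : v ≠ w) :
    PathAlg.p k Q v * PathAlg.p k Q w = 0 := by
  have h := PathAlg.mk_rel k Q (PathRel.vertex_mul_ne v w hvw)
  simpa [map_mul, PathAlg.p] using h

theorem PathAlg.sum_p : (∑ v : Q.V, PathAlg.p k Q v) = 1 := by
  have h := PathAlg.mk_rel k Q (PathRel.sum_vertex)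
  simpa [map_sum, PathAlg.p] using h

theorem PathAlg.arrow_mul_tgt (e : Q.A) :
    PathAlg.arrow k Q e * PathAlg.p k Q (Q.tgt e) = PathAlg.arrow k Q e := by
  have h := PathAlg.mk_rel k Q (PathRel.mul_tgt e)
  simpa [map_mul, PathAlg.p, PathAlg.arrow] using h

theorem PathAlg.src_mul_arrow (e : Q.A) :
    PathAlg.p k Q (Q.src e) * PathAlg.arrow k Q e = PathAlg.arrow k Q e := by
  have h := PathAlg.mk_rel k Q (PathRel.src_mul e)
  simpa [map_mul, PathAlg.p, PathAlg.arrow] using h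

/-- The set of vertices `{p v | v ∈ Q.V}` of the path algebra, as a finite set. -/
noncomputable def vertexFinset : Finset (PathAlg k Q) :=
  letI := Classical.decEq (PathAlg k Q)
  Finset.univ.image (PathAlg.p k Q)

end LPA

namespace LPA

/-- Generators of the Leavitt path algebra: vertex idempotents, arrows, and ghost arrows. -/
inductive LGen (Q : FinQuiver) : Type
  | vertex (v : Q.V) : LGen Q
  | edge (e : Q.A) : LGen Q
  | ghost (e : Q.A) : LGen Q

/-- Defining relations of the Leavitt path algebra `L_k(E)`: (V), (E1), (E2), (CK1), (CK2),
together with `∑ p_v = 1`. -/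
inductive LeavittRel (k : Type) [CommRing k] (Q : FinQuiver) :
    FreeAlgebra k (LGen Q) → FreeAlgebra k (LGen Q) → Prop
  | vertex_mul_self (v : Q.V) :
      LeavittRel k Q (FreeAlgebra.ι k (LGen.vertex v) * FreeAlgebra.ι k (LGen.vertex v))
        (FreeAlgebra.ι k (LGen.vertex v))
  | vertex_mul_ne (v w : Q.V) (h : v ≠ w) :
      LeavittRel k Q (FreeAlgebra.ι k (LGen.vertex v) * FreeAlgebra.ι k (LGen.vertex w)) 0
  | sum_vertex :
      LeavittRel k Q (∑ v : Q.V, FreeAlgebra.ι k (LGen.vertex v)) 1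
  | src_mul (e : Q.A) :
      LeavittRel k Q (FreeAlgebra.ι k (LGen.vertex (Q.src e)) * FreeAlgebra.ι k (LGen.edge e))
        (FreeAlgebra.ι k (LGen.edge e))
  | mul_tgt (e : Q.A) :
      LeavittRel k Q (FreeAlgebra.ι k (LGen.edge e) * FreeAlgebra.ι k (LGen.vertex (Q.tgt e)))
        (FreeAlgebra.ι k (LGen.edge e))
  | tgt_mul_ghost (e : Q.A) :
      LeavittRel k Q (FreeAlgebra.ι k (LGen.vertex (Q.tgt e)) * FreeAlgebra.ι k (LGen.ghost e))
        (FreeAlgebra.ι k (LGen.ghost e))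
  | ghost_mul_src (e : Q.A) :
      LeavittRel k Q (FreeAlgebra.ι k (LGen.ghost e) * FreeAlgebra.ι k (LGen.vertex (Q.src e)))
        (FreeAlgebra.ι k (LGen.ghost e))
  | ghost_mul_edge_self (e : Q.A) :
      LeavittRel k Q (FreeAlgebra.ι k (LGen.ghost e) * FreeAlgebra.ι k (LGen.edge e))
        (FreeAlgebra.ι k (LGen.vertex (Q.tgt e)))
  | ghost_mul_edge_ne (e f : Q.A) (h : e ≠ f) :
      LeavittRel k Q (FreeAlgebra.ι k (LGen.ghost e) * FreeAlgebra.ι k (LGen.edge f)) 0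
  | cuntz_krieger (v : Q.V) (h : ∃ e : Q.A, Q.src e = v) :
      LeavittRel k Q
        (∑ e ∈ Finset.univ.filter (fun e : Q.A => Q.src e = v),
          FreeAlgebra.ι k (LGen.edge e) * FreeAlgebra.ι k (LGen.ghost e))
        (FreeAlgebra.ι k (LGen.vertex v))

/-- The Leavitt path algebra `L_k(E)`. -/
def Leavitt (k : Type) [CommRing k] (Q : FinQuiver) : Type :=
  RingQuot (LeavittRel k Q)

variable (k : Type) [CommRing k] (Q : FinQuiver)

noncomputable instance : Ring (Leavitt k Q) :=
  inferInstanceAs (Ring (RingQuot (LeavittRel k Q)))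

noncomputable instance : Algebra k (Leavitt k Q) :=
  inferInstanceAs (Algebra k (RingQuot (LeavittRel k Q)))

/-- The quotient map from the free algebra onto the Leavitt path algebra. -/
noncomputable def Leavitt.mk : FreeAlgebra k (LGen Q) →ₐ[k] Leavitt k Q :=
  RingQuot.mkAlgHom k (LeavittRel k Q)

/-- The vertex idempotent `p v` in the Leavitt path algebra. -/
noncomputable def Leavitt.p (v : Q.V) : Leavitt k Q :=
  Leavitt.mk k Q (FreeAlgebra.ι k (LGen.vertex v))

/-- The arrow `e` in the Leavitt path algebra. -/
noncomputable def Leavitt.ed (e : Q.A) : Leavitt k Q :=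
  Leavitt.mk k Q (FreeAlgebra.ι k (LGen.edge e))

/-- The ghost arrow `ē` in the Leavitt path algebra. -/
noncomputable def Leavitt.gh (e : Q.A) : Leavitt k Q :=
  Leavitt.mk k Q (FreeAlgebra.ι k (LGen.ghost e))

theorem Leavitt.mk_rel {x y : FreeAlgebra k (LGen Q)} (h : LeavittRel k Q x y) :
    Leavitt.mk k Q x = Leavitt.mk k Q y :=
  RingQuot.mkAlgHom_rel k h

theorem Leavitt.p_mul_self (v : Q.V) : Leavitt.p k Q v * Leavitt.p k Q v = Leavitt.p k Q v := by
  have h := Leavitt.mk_rel k Q (LeavittRel.vertex_mul_self v)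
  simpa [map_mul, Leavitt.p] using h

theorem Leavitt.p_mul_ne (v w : Q.V) (hvw : v ≠ w) :
    Leavitt.p k Q v * Leavitt.p k Q w = 0 := by
  have h := Leavitt.mk_rel k Q (LeavittRel.vertex_mul_ne v w hvw)
  simpa [map_mul, Leavitt.p] using h

theorem Leavitt.sum_p : (∑ v : Q.V, Leavitt.p k Q v) = 1 := by
  have h := Leavitt.mk_rel k Q (LeavittRel.sum_vertex)
  simpa [map_sum, Leavitt.p] using h

theorem Leavitt.tgt_mul_gh (e : Q.A) :
    Leavitt.p k Q (Q.tgt e) * Leavitt.gh k Q e = Leavitt.gh k Q e := by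
  have h := Leavitt.mk_rel k Q (LeavittRel.tgt_mul_ghost e)
  simpa [map_mul, Leavitt.p, Leavitt.gh] using h

theorem Leavitt.gh_mul_src (e : Q.A) :
    Leavitt.gh k Q e * Leavitt.p k Q (Q.src e) = Leavitt.gh k Q e := by
  have h := Leavitt.mk_rel k Q (LeavittRel.ghost_mul_src e)
  simpa [map_mul, Leavitt.p, Leavitt.gh] using h

/-- The canonical embedding `P_k(Ē) → L_k(E)` of the path algebra of the inverse quiver into
the Leavitt path algebra, sending `p v ↦ p v` and each reversed arrow `ē ↦ ē`. -/
noncomputable def revToLeavitt : PathAlg k Q.rev →ₐ[k] Leavitt k Q :=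
  RingQuot.liftAlgHom k ⟨((FreeAlgebra.lift k fun g =>
    match g with
    | PathGen.vertex v => Leavitt.p k Q v
    | PathGen.edge e => Leavitt.gh k Q e : FreeAlgebra k (PathGen Q.rev) →ₐ[k] Leavitt k Q)), by
      intro x y h
      induction h with
      | vertex_mul_self v =>
          simp only [map_mul, FreeAlgebra.lift_ι_apply]
          exact Leavitt.p_mul_self k Q v
      | vertex_mul_ne v w h =>
          simp only [map_mul, map_zero, FreeAlgebra.lift_ι_apply]
          exact Leavitt.p_mul_ne k Q v w h
      | sum_vertex =>
          simp only [map_sum, map_one, FreeAlgebra.lift_ι_apply]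
          exact Leavitt.sum_p k Q
      | src_mul e =>
          simp only [map_mul, FreeAlgebra.lift_ι_apply]
          exact Leavitt.tgt_mul_gh k Q e
      | mul_tgt e =>
          simp only [map_mul, FreeAlgebra.lift_ι_apply]
          exact Leavitt.gh_mul_src k Q e⟩

/-- The canonical embedding `P_k(E) → L_k(E)` of the path algebra into the Leavitt path
algebra, sending `p v ↦ p v` and each arrow `e ↦ e`. -/
noncomputable def pathToLeavitt : PathAlg k Q →ₐ[k] Leavitt k Q :=
  RingQuot.liftAlgHom k ⟨((FreeAlgebra.lift k fun g =>
    match g with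
    | PathGen.vertex v => Leavitt.p k Q v
    | PathGen.edge e => Leavitt.ed k Q e : FreeAlgebra k (PathGen Q) →ₐ[k] Leavitt k Q)), by
      intro x y h
      induction h with
      | vertex_mul_self v =>
          simp only [map_mul, FreeAlgebra.lift_ι_apply]
          exact Leavitt.p_mul_self k Q v
      | vertex_mul_ne v w h =>
          simp only [map_mul, map_zero, FreeAlgebra.lift_ι_apply]
          exact Leavitt.p_mul_ne k Q v w h
      | sum_vertex =>
          simp only [map_sum, map_one, FreeAlgebra.lift_ι_apply]
          exact Leavitt.sum_p k Q
      | src_mul e =>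
          simp only [map_mul, FreeAlgebra.lift_ι_apply]
          have h := Leavitt.mk_rel k Q (LeavittRel.src_mul e)
          simpa [map_mul, Leavitt.p, Leavitt.ed] using h
      | mul_tgt e =>
          simp only [map_mul, FreeAlgebra.lift_ι_apply]
          have h := Leavitt.mk_rel k Q (LeavittRel.mul_tgt e)
          simpa [map_mul, Leavitt.p, Leavitt.ed] using h⟩

end LPA

namespace LPA

open TensorProduct

variable (P L : Type) [Ring P] [Ring L] (φ : P →+* L)

/-- The subgroup of relations defining the balanced tensor product `L ⊗_P M` (where `L` is a
right `P`-module via `φ` and `M` a left `P`-module) as a quotient of `L ⊗_ℤ M`. -/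
noncomputable def trel (M : Type) [AddCommGroup M] [Module P M] :
    Submodule L (TensorProduct ℤ L M) :=
  Submodule.span L
    {z | ∃ (l : L) (p : P) (m : M), z = (l * φ p) ⊗ₜ[ℤ] m - l ⊗ₜ[ℤ] (p • m)}

/-- The balanced tensor product `L ⊗_P M`, a left `L`-module. -/
abbrev TensorPhi (M : Type) [AddCommGroup M] [Module P M] : Type :=
  TensorProduct ℤ L M ⧸ trel P L φ M

/-- Functoriality of `L ⊗_P -` : the map induced on balanced tensor products by a `P`-linear
map `f : M → N`. -/
noncomputable def tmap {M N : Type} [AddCommGroup M] [Module P M] [AddCommGroup N]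
    [Module P N] (f : M →ₗ[P] N) : TensorPhi P L φ M →ₗ[L] TensorPhi P L φ N :=
  Submodule.mapQ _ _
    (TensorProduct.AlgebraTensorModule.map (LinearMap.id : L →ₗ[L] L)
      f.toAddMonoidHom.toIntLinearMap)
    (by
      refine Submodule.span_le.mpr ?_
      rintro z ⟨l, p, m, rfl⟩
      simp only [SetLike.mem_coe, Submodule.mem_comap, map_sub,
        TensorProduct.AlgebraTensorModule.map_tmul, LinearMap.id_coe, id_eq,
        AddMonoidHom.coe_toIntLinearMap, LinearMap.toAddMonoidHom_coe]
      exact Submodule.subset_span ⟨l, p, f m, by rw [f.map_smul]⟩)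

/-- `L` is flat as a right `P`-module (via `φ : P → L`): the functor `L ⊗_P -` preserves
injectivity. -/
def RightFlat : Prop :=
  ∀ (M N : Type) [AddCommGroup M] [Module P M] [AddCommGroup N] [Module P N],
    ∀ f : M →ₗ[P] N, Function.Injective f → Function.Injective (tmap P L φ f)

end LPA

namespace LPA

/-- Right multiplication by a fixed element, as an endomorphism of the left regular module. -/
noncomputable def rightMul (R : Type) [Ring R] (x : R) : R →ₗ[R] R where
  toFun y := y * x
  map_add' a b := add_mul a b x
  map_smul' r y := by simp [smul_eq_mul, mul_assoc]

variable (k : Type) [CommRing k] (Q : FinQuiver)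

/-- The principal left ideal `P_k(Ē)·p_v` of the path algebra of the inverse quiver. -/
noncomputable def pIdeal (v : Q.V) : Submodule (PathAlg k Q.rev) (PathAlg k Q.rev) :=
  LinearMap.range (rightMul (PathAlg k Q.rev) (PathAlg.p k Q.rev v))

/-- The principal left ideal `L_k(E)·p_v` of the Leavitt path algebra. -/
noncomputable def pIdealL (v : Q.V) : Submodule (Leavitt k Q) (Leavitt k Q) :=
  LinearMap.range (rightMul (Leavitt k Q) (Leavitt.p k Q v))

/-- A sink: a vertex emitting no arrows. -/
def IsSink (v : Q.V) : Prop := ∀ e : Q.A, Q.src e ≠ v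

/-- For a non-sink vertex `i` (and, degenerately, for a sink, where the domain is trivial),
the left `P_k(Ē)`-module homomorphism
`ν_i : ⊕_{e ∈ s⁻¹(i)} P_k(Ē)·p_{r(e)} → P_k(Ē)·p_i`, `(r_e) ↦ ∑ r_e·ē`. -/
noncomputable def nu (i : Q.V) :
    ((e : {e : Q.A // Q.src e = i}) → ↥(pIdeal k Q (Q.tgt e.1)))
      →ₗ[PathAlg k Q.rev] ↥(pIdeal k Q i) :=
  LinearMap.codRestrict (pIdeal k Q i)
    { toFun := fun x =>
        ∑ e : {e : Q.A // Q.src e = i}, ((x e : PathAlg k Q.rev) * PathAlg.arrow k Q.rev e.1)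
      map_add' := by
        intro a b
        simp [add_mul, Finset.sum_add_distrib]
      map_smul' := by
        intro r x
        simp [smul_eq_mul, Finset.mul_sum, mul_assoc] }
    (by
      intro x
      refine ⟨∑ e : {e : Q.A // Q.src e = i},
        ((x e : PathAlg k Q.rev) * PathAlg.arrow k Q.rev e.1), ?_⟩
      simp only [rightMul, LinearMap.coe_mk, AddHom.coe_mk, Finset.sum_mul]
      refine Finset.sum_congr rfl fun e _ => ?_
      obtain ⟨e, he⟩ := e
      subst he
      rw [mul_assoc]
      congr 1
      exact PathAlg.arrow_mul_tgt k Q.rev e)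

/-- The cokernel of `ν_i`, a finite-dimensional simple `P_k(Ē)`-module. -/
abbrev CokerNu (i : Q.V) : Type :=
  ↥(pIdeal k Q i) ⧸ LinearMap.range (nu k Q i)

/-- Reachability by a (possibly trivial) path in the quiver `E`. -/
inductive Reaches : Q.V → Q.V → Prop
  | refl (v : Q.V) : Reaches v v
  | step (e : Q.A) {w : Q.V} : Reaches (Q.tgt e) w → Reaches (Q.src e) w

end LPA

namespace LPA

/-- A composition series `0 = c 0 < c 1 < … < c ℓ = M` with simple factors. -/
def IsCompSeries {R M : Type} [Ring R] [AddCommGroup M] [Module R M] (ℓ : ℕ)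
    (c : Fin (ℓ + 1) → Submodule R M) : Prop :=
  c 0 = ⊥ ∧ c (Fin.last ℓ) = ⊤ ∧
    ∀ i : Fin ℓ, c i.castSucc < c i.succ ∧
      IsSimpleModule R
        (↥(c i.succ) ⧸ Submodule.comap (c i.succ).subtype (c i.castSucc))

/-- The `i`-th factor `c (i+1) / c i` of a series of submodules. -/
abbrev SeriesFactor {R M : Type} [Ring R] [AddCommGroup M] [Module R M] {ℓ : ℕ}
    (c : Fin (ℓ + 1) → Submodule R M) (i : Fin ℓ) : Type :=
  ↥(c i.succ) ⧸ Submodule.comap (c i.succ).subtype (c i.castSucc)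

end LPA

/-!
If `L_k(E) ⊗ M = 0`, then every `P_k(Ē)`-linear map from `M` to an `L_k(E)`-module vanishes. Take
as target the germs of `M`-valued functions on paths of `E`, where a neighbourhood consists of the
paths that are long or end at a sink; arrows act by adding or removing the first arrow of a path,
and the Cuntz–Krieger relation at a non-sink holds because long paths have a first arrow. The map
`a ↦ (w ↦ w̄ a)` is `P_k(Ē)`-linear, so each `a ∈ M` is killed by `w̄` for every path `w` that is
long enough or ends at a sink. By induction on that length, adjoin first the vectors `ē a` and then
the vectors `p_v a`. Modulo the former, each `p_v a` is killed by all arrows, so it contributes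
nothing or a factor `coker ν_v`; if `v` is a sink, then `p_v a = 0`.

Conversely, if `p_v m = m` for a non-sink `v` and `ē m = 0` for all `e`, then
`1 ⊗ m = ∑ e ē ⊗ m = ∑ e ⊗ ē m = 0`, so `L_k(E) ⊗ coker ν_v = 0`.
-/

namespace LPA

section Tensor

open TensorProduct

variable {P L : Type} [Ring P] [Ring L] (φ : P →+* L)
variable (M : Type) [AddCommGroup M] [Module P M]

/-- The canonical `φ`-semilinear map `m ↦ 1 ⊗ m` from `M` to `L ⊗_P M`. -/
noncomputable def tensorUnit : M →ₛₗ[φ] TensorPhi P L φ M where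
  toFun m := (trel P L φ M).mkQ (1 ⊗ₜ m)
  map_add' m n := by rw [tmul_add, map_add]
  map_smul' p m := by
    have relation : (φ p ⊗ₜ[ℤ] m : L ⊗[ℤ] M) - 1 ⊗ₜ (p • m) ∈ trel P L φ M :=
      Submodule.subset_span ⟨1, p, m, by rw [one_mul]⟩
    rw [← map_smul, smul_tmul', smul_eq_mul, mul_one]
    exact ((Submodule.Quotient.eq _).2 relation).symm

variable {M}

theorem smul_tensorUnit (l : L) (m : M) :
    l • tensorUnit φ M m = (trel P L φ M).mkQ (l ⊗ₜ m) := by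
  change l • (trel P L φ M).mkQ (1 ⊗ₜ m) = _
  rw [← map_smul, smul_tmul', smul_eq_mul, mul_one]

theorem subsingleton_tensorPhi_iff :
    Subsingleton (TensorPhi P L φ M) ↔ LinearMap.ker (tensorUnit φ M) = ⊤ := by
  refine ⟨fun _ => eq_top_iff.2 fun m _ => Subsingleton.elim _ _, fun unit_eq_zero => ?_⟩
  refine subsingleton_of_forall_eq 0 fun z => ?_
  obtain ⟨t, rfl⟩ := (trel P L φ M).mkQ_surjective z
  induction t with
  | zero => rw [map_zero]
  | add s t hs ht => rw [map_add, hs, ht, add_zero]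
  | tmul l m =>
    rw [← smul_tensorUnit, LinearMap.mem_ker.1 (unit_eq_zero ▸ Submodule.mem_top), smul_zero]

variable {φ} {X : Type*} [AddCommGroup X] [Module L X]

/-- The `L`-linear map `l ⊗ m ↦ l • j m` induced on `L ⊗_P M` by a `φ`-semilinear map `j`. -/
noncomputable def tensorLift (j : M →ₛₗ[φ] X) : TensorPhi P L φ M →ₗ[L] X :=
  (trel P L φ M).liftQ
    (AlgebraTensorModule.lift
      (LinearMap.toSpanSingleton L (M →ₗ[ℤ] X) j.toAddMonoidHom.toIntLinearMap))
    (Submodule.span_le.2 (by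
      rintro _ ⟨l, p, m, rfl⟩
      simp [mul_smul]))

theorem tensorLift_tensorUnit (j : M →ₛₗ[φ] X) (m : M) :
    tensorLift j (tensorUnit φ M m) = j m :=
  (Submodule.liftQ_apply _ _ _).trans (by simp)

theorem eq_zero_of_subsingleton_tensorPhi [Subsingleton (TensorPhi P L φ M)]
    (j : M →ₛₗ[φ] X) (m : M) : j m = 0 := by
  rw [← tensorLift_tensorUnit, Subsingleton.elim (tensorUnit φ M m) 0, map_zero]

end Tensor

section PathAlgebra

variable (k : Type) [CommRing k] (Q : FinQuiver)

/-- The trivial path `p_v` in `P_k(Ē)`, indexed by the vertices of `E`. Together with `ghost`, it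
keeps the vertices and arrows of the inverse quiver `Q.rev` out of sight. -/
noncomputable def ghostVertex (v : Q.V) : PathAlg k Q.rev :=
  PathAlg.p k Q.rev v

/-- The inverse arrow `ē` in `P_k(Ē)`, indexed by the arrows of `E`. -/
noncomputable def ghost (e : Q.A) : PathAlg k Q.rev :=
  PathAlg.arrow k Q.rev e

variable {k Q}

theorem PathAlg.rev_induction {C : PathAlg k Q.rev → Prop}
    (algebraMap : ∀ c : k, C (algebraMap k _ c)) (vertex : ∀ v, C (ghostVertex k Q v))
    (ghost : ∀ e, C (ghost k Q e)) (mul : ∀ r s, C r → C s → C (r * s))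
    (add : ∀ r s, C r → C s → C (r + s)) (r : PathAlg k Q.rev) : C r := by
  obtain ⟨x, rfl⟩ := RingQuot.mkAlgHom_surjective k (PathRel k Q.rev) r
  change C (PathAlg.mk k Q.rev x)
  induction x with
  | grade0 c => rw [AlgHom.commutes]; exact algebraMap c
  | grade1 g => exact g.rec vertex ghost
  | mul x y hx hy => rw [map_mul]; exact mul _ _ hx hy
  | add x y hx hy => rw [map_add]; exact add _ _ hx hy

theorem ghostVertex_mul_ghostVertex (v w : Q.V) :
    ghostVertex k Q v * ghostVertex k Q w = if v = w then ghostVertex k Q v else 0 := by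
  split_ifs with h
  · subst h
    exact PathAlg.p_mul_self k Q.rev v
  · exact PathAlg.p_mul_ne k Q.rev v w h

theorem ghostVertex_mul_self (v : Q.V) :
    ghostVertex k Q v * ghostVertex k Q v = ghostVertex k Q v :=
  PathAlg.p_mul_self k Q.rev v

theorem sum_ghostVertex : ∑ v, ghostVertex k Q v = 1 :=
  PathAlg.sum_p k Q.rev

theorem ghost_mul_ghostVertex_src (e : Q.A) :
    ghost k Q e * ghostVertex k Q (Q.src e) = ghost k Q e :=
  PathAlg.arrow_mul_tgt k Q.rev e

theorem ghostVertex_tgt_mul_ghost (e : Q.A) :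
    ghostVertex k Q (Q.tgt e) * ghost k Q e = ghost k Q e :=
  PathAlg.src_mul_arrow k Q.rev e

theorem ghost_mul_ghostVertex (e : Q.A) (v : Q.V) :
    ghost k Q e * ghostVertex k Q v = if Q.src e = v then ghost k Q e else 0 := by
  rw [← ghost_mul_ghostVertex_src, mul_assoc, ghostVertex_mul_ghostVertex, mul_ite, mul_zero]

theorem sum_ghostVertex_smul {M : Type*} [AddCommGroup M] [Module (PathAlg k Q.rev) M] (m : M) :
    ∑ v, ghostVertex k Q v • m = m := by
  rw [← Finset.sum_smul, sum_ghostVertex, one_smul]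

/-- The character of `P_k(R)` with value `1` on the trivial path at `v` and `0` on all other
paths; it gives the scalars by which `P_k(R)` acts on the simple module at the vertex `v`. -/
noncomputable def PathAlg.character (k : Type) [CommRing k] (R : FinQuiver) (v : R.V) :
    PathAlg k R →ₐ[k] k :=
  RingQuot.liftAlgHom k ⟨FreeAlgebra.lift k fun g =>
    match g with
    | PathGen.vertex w => if w = v then 1 else 0
    | PathGen.edge _ => 0, fun x y h => by
      induction h with
      | vertex_mul_ne u w h => grind [FreeAlgebra.lift_ι_apply]
      | _ => simp +contextual⟩

theorem character_ghostVertex (v w : Q.V) :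
    PathAlg.character k Q.rev v (ghostVertex k Q w) = if w = v then 1 else 0 :=
  (RingQuot.liftAlgHom_mkAlgHom_apply ..).trans (FreeAlgebra.lift_ι_apply ..)

theorem character_ghost (v : Q.V) (e : Q.A) :
    PathAlg.character k Q.rev v (ghost k Q e) = 0 :=
  (RingQuot.liftAlgHom_mkAlgHom_apply ..).trans (FreeAlgebra.lift_ι_apply ..)

end PathAlgebra

section SocleVector

variable {k : Type} [CommRing k] {Q : FinQuiver}
variable {M : Type*} [AddCommGroup M] [Module (PathAlg k Q.rev) M]

variable (k Q) in
/-- A vector of `p_v M` annihilated by all arrows `ē`; such a vector spans a copy of the simple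
module at `v` (or zero). -/
structure IsSocleVector (v : Q.V) (n : M) : Prop where
  vertex_smul : ghostVertex k Q v • n = n
  ghost_smul : ∀ e, ghost k Q e • n = 0

namespace IsSocleVector

variable {v : Q.V} {n : M}

theorem smul_eq (hn : IsSocleVector k Q v n) (r : PathAlg k Q.rev) :
    r • n = algebraMap k (PathAlg k Q.rev) (PathAlg.character k Q.rev v r) • n := by
  induction r using PathAlg.rev_induction with
  | algebraMap c => rw [AlgHom.commutes, Algebra.algebraMap_self_apply]
  | vertex w =>
    rw [character_ghostVertex, ← hn.vertex_smul, ← mul_smul, ghostVertex_mul_ghostVertex]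
    split_ifs with h
    · rw [h, map_one, one_smul]
    · rw [map_zero, zero_smul, zero_smul]
  | ghost e => rw [hn.ghost_smul, character_ghost, map_zero, zero_smul]
  | mul r s hr hs =>
    rw [mul_smul, hs, ← mul_smul, ← Algebra.commutes, mul_smul, hr, ← mul_smul, ← map_mul,
      ← mul_comm, ← map_mul]
  | add r s hr hs => rw [add_smul, hr, hs, ← add_smul, ← map_add, ← map_add]

theorem smul (hn : IsSocleVector k Q v n) (r : PathAlg k Q.rev) :
    IsSocleVector k Q v (r • n) := by
  rw [hn.smul_eq r]
  constructor
  · rw [← mul_smul, ← Algebra.commutes, mul_smul, hn.vertex_smul]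
  · intro e
    rw [← mul_smul, ← Algebra.commutes, mul_smul, hn.ghost_smul, smul_zero]

theorem isSimpleModule {k : Type} [Field k] [Module (PathAlg k Q.rev) M]
    (hn : IsSocleVector k Q v n) (hn₀ : n ≠ 0)
    (hspan : Submodule.span (PathAlg k Q.rev) {n} = ⊤) : IsSimpleModule (PathAlg k Q.rev) M := by
  refine isSimpleModule_iff_toSpanSingleton_surjective.2 ⟨nontrivial_of_ne n 0 hn₀, fun m hm => ?_⟩
  rw [← LinearMap.range_eq_top, LinearMap.range_toSpanSingleton, eq_top_iff, ← hspan,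
    Submodule.span_singleton_le_iff_mem]
  obtain ⟨r, rfl⟩ := Submodule.mem_span_singleton.1 (hspan ▸ Submodule.mem_top : m ∈ _)
  rw [hn.smul_eq] at hm ⊢
  set c := PathAlg.character k Q.rev v r
  have hc : c ≠ 0 := fun hc => hm (by rw [hc, map_zero, zero_smul])
  refine Submodule.mem_span_singleton.2 ⟨algebraMap k _ c⁻¹, ?_⟩
  rw [← mul_smul, ← map_mul, inv_mul_cancel₀ hc, map_one, one_smul]

end IsSocleVector

end SocleVector

section Cokernel

variable {k : Type} {Q : FinQuiver}

section CommRing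

variable [CommRing k]

variable (k Q) in
/-- The canonical generator `p_v` of the projective module `P_k(Ē) p_v`. -/
noncomputable def pIdealGen (v : Q.V) : pIdeal k Q v :=
  ⟨ghostVertex k Q v, ghostVertex k Q v, ghostVertex_mul_self v⟩

theorem coe_smul_pIdealGen {v : Q.V} (x : pIdeal k Q v) :
    (x : PathAlg k Q.rev) • pIdealGen k Q v = x := by
  obtain ⟨_, y, rfl⟩ := x
  refine Subtype.ext ?_
  change y * ghostVertex k Q v * ghostVertex k Q v = y * ghostVertex k Q v
  rw [mul_assoc, ghostVertex_mul_self]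

theorem coe_ghost_smul_pIdealGen (e : Q.A) (v : Q.V) :
    ((ghost k Q e • pIdealGen k Q v : pIdeal k Q v) : PathAlg k Q.rev) =
      if Q.src e = v then ghost k Q e else 0 :=
  ghost_mul_ghostVertex e v

theorem coe_nu (v : Q.V) (x : (e : {e : Q.A // Q.src e = v}) → pIdeal k Q (Q.tgt e.1)) :
    (nu k Q v x : PathAlg k Q.rev) = ∑ e, (x e : PathAlg k Q.rev) * ghost k Q e.1 :=
  rfl

theorem character_nu (v : Q.V)
    (x : (e : {e : Q.A // Q.src e = v}) → pIdeal k Q (Q.tgt e.1)) :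
    PathAlg.character k Q.rev v (nu k Q v x) = 0 := by
  simp only [coe_nu, map_sum, map_mul, character_ghost, mul_zero, Finset.sum_const_zero]

theorem coe_nu_single_pIdealGen {v : Q.V} (e : {e : Q.A // Q.src e = v}) :
    (nu k Q v (Pi.single e (pIdealGen k Q _)) : PathAlg k Q.rev) = ghost k Q e.1 := by
  rw [coe_nu, Finset.sum_eq_single e]
  · rw [Pi.single_eq_same]
    exact ghostVertex_tgt_mul_ghost e.1
  · intro f _ hfe
    rw [Pi.single_eq_of_ne hfe, ZeroMemClass.coe_zero, zero_mul]
  · exact fun h => absurd (Finset.mem_univ e) h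

variable (k Q) in
/-- The class of `p_v` in `coker ν_v`. -/
noncomputable def cokerGen (v : Q.V) : CokerNu k Q v :=
  (LinearMap.range (nu k Q v)).mkQ (pIdealGen k Q v)

theorem span_cokerGen (v : Q.V) : Submodule.span (PathAlg k Q.rev) {cokerGen k Q v} = ⊤ := by
  refine eq_top_iff.2 fun z _ => ?_
  obtain ⟨x, rfl⟩ := Submodule.mkQ_surjective _ z
  rw [← coe_smul_pIdealGen x, map_smul]
  exact Submodule.smul_mem _ _ (Submodule.mem_span_singleton_self _)

theorem isSocleVector_cokerGen (v : Q.V) : IsSocleVector k Q v (cokerGen k Q v) where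
  vertex_smul := congrArg (Submodule.mkQ _) (coe_smul_pIdealGen (pIdealGen k Q v))
  ghost_smul e := by
    rw [cokerGen, ← map_smul, Submodule.mkQ_apply, Submodule.Quotient.mk_eq_zero]
    by_cases he : Q.src e = v
    · refine ⟨Pi.single ⟨e, he⟩ (pIdealGen k Q _), Subtype.ext ?_⟩
      rw [coe_nu_single_pIdealGen, coe_ghost_smul_pIdealGen, if_pos he]
    · have smul_eq_zero : ghost k Q e • pIdealGen k Q v = 0 :=
        Subtype.ext ((coe_ghost_smul_pIdealGen e v).trans (if_neg he))
      rw [smul_eq_zero]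
      exact zero_mem _

theorem isSocleVector_cokerNu {v : Q.V} (z : CokerNu k Q v) : IsSocleVector k Q v z := by
  have hz : z ∈ Submodule.span (PathAlg k Q.rev) {cokerGen k Q v} := by
    rw [span_cokerGen]
    exact Submodule.mem_top
  obtain ⟨r, rfl⟩ := Submodule.mem_span_singleton.1 hz
  exact (isSocleVector_cokerGen v).smul r

theorem cokerGen_ne_zero [Nontrivial k] (v : Q.V) : cokerGen k Q v ≠ 0 := by
  intro h
  obtain ⟨x, hx⟩ := (Submodule.Quotient.mk_eq_zero _).1 h
  have character_eq_one : PathAlg.character k Q.rev v (pIdealGen k Q v) = 1 :=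
    (character_ghostVertex v v).trans (if_pos rfl)
  rw [← hx, character_nu] at character_eq_one
  exact zero_ne_one character_eq_one

namespace IsSocleVector

variable {X : Type*} [AddCommGroup X] [Module (PathAlg k Q.rev) X] {v : Q.V} {n : X}

theorem nu_smul (hn : IsSocleVector k Q v n)
    (x : (e : {e : Q.A // Q.src e = v}) → pIdeal k Q (Q.tgt e.1)) :
    (nu k Q v x : PathAlg k Q.rev) • n = 0 := by
  rw [hn.smul_eq, character_nu, map_zero, zero_smul]

/-- The homomorphism from `coker ν_v` sending the class of `p_v` to a given socle vector at
`v`. -/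
noncomputable def cokerLift (hn : IsSocleVector k Q v n) : CokerNu k Q v →ₗ[PathAlg k Q.rev] X :=
  (LinearMap.range (nu k Q v)).liftQ
    (LinearMap.toSpanSingleton (PathAlg k Q.rev) X n ∘ₗ (pIdeal k Q v).subtype)
    (LinearMap.range_le_ker_iff.2 (LinearMap.ext hn.nu_smul))

theorem cokerLift_cokerGen (hn : IsSocleVector k Q v n) :
    hn.cokerLift (cokerGen k Q v) = n :=
  hn.vertex_smul

end IsSocleVector

end CommRing

variable [Field k]

instance isSimpleModule_cokerNu (v : Q.V) : IsSimpleModule (PathAlg k Q.rev) (CokerNu k Q v) :=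
  (isSocleVector_cokerGen v).isSimpleModule (cokerGen_ne_zero v) (span_cokerGen v)

theorem IsSocleVector.nonempty_equiv_cokerNu {X : Type*} [AddCommGroup X]
    [Module (PathAlg k Q.rev) X] {v : Q.V} {n : X} (hn : IsSocleVector k Q v n) (hn₀ : n ≠ 0)
    (hspan : Submodule.span (PathAlg k Q.rev) {n} = ⊤) :
    Nonempty (X ≃ₗ[PathAlg k Q.rev] CokerNu k Q v) := by
  have injective : Function.Injective hn.cokerLift := by
    refine hn.cokerLift.injective_or_eq_zero.resolve_right fun h => hn₀ ?_
    rw [← hn.cokerLift_cokerGen, h, LinearMap.zero_apply]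
  have surjective : Function.Surjective hn.cokerLift := by
    rw [← LinearMap.range_eq_top, eq_top_iff, ← hspan, Submodule.span_singleton_le_iff_mem]
    exact ⟨_, hn.cokerLift_cokerGen⟩
  exact ⟨(LinearEquiv.ofBijective hn.cokerLift ⟨injective, surjective⟩).symm⟩

end Cokernel

section GermPullback

open Filter

variable {X ι : Type*} {l : Filter X} {φ ψ : X → Option X}

/-- The partial self-map `φ` tends to `l` along the part of `l` where it is defined, so that it
acts on germs at `l` by precomposition. -/
def PreservesGerms (l : Filter X) (φ : X → Option X) : Prop :=
  Tendsto φ l (l.map some ⊔ pure none)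

theorem PreservesGerms.bind (hφ : PreservesGerms l φ) (hψ : PreservesGerms l ψ) :
    PreservesGerms l fun x => (φ x).bind ψ := by
  have bind_some :
      Tendsto (fun o : Option X => o.bind ψ) (l.map some) (l.map some ⊔ pure none) := hψ
  have bind_none : Tendsto (fun o : Option X => o.bind ψ) (pure none) (pure none) :=
    tendsto_pure_pure _ _
  exact (tendsto_sup.2 ⟨bind_some, bind_none.mono_right le_sup_right⟩).comp hφ

theorem PreservesGerms.elim_eventuallyEq {N : Type*} (hφ : PreservesGerms l φ) {f g : X → N}
    (hfg : f =ᶠ[l] g) (c : N) : (fun x => (φ x).elim c f) =ᶠ[l] fun x => (φ x).elim c g := by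
  have elim_some : ∀ᶠ o in l.map some, o.elim c f = o.elim c g := hfg
  exact hφ.eventually (eventually_sup.2 ⟨elim_some, eventually_pure.2 rfl⟩)

variable (k : Type*) [Semiring k] (N : Type*) [AddCommMonoid N] [Module k N]

/-- Pullback of germs along a partial self-map `φ`, with value `0` where `φ` is undefined. -/
def germPullback (hφ : PreservesGerms l φ) : Module.End k (l.Germ N) where
  toFun := Germ.map' (fun f x => (φ x).elim 0 f) fun _ _ hfg => hφ.elim_eventuallyEq hfg 0
  map_add' F G := by
    induction F, G using Germ.inductionOn₂ with | _ f g
    refine Germ.coe_eq.2 (.of_forall fun x => ?_)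
    cases h : φ x <;> simp [h]
  map_smul' c F := by
    induction F using Germ.inductionOn with | _ f
    refine Germ.coe_eq.2 (.of_forall fun x => ?_)
    cases h : φ x <;> simp [h]

variable {k N}

theorem germPullback_coe (hφ : PreservesGerms l φ) (f : X → N) :
    germPullback k N hφ (f : l.Germ N) = ((fun x => (φ x).elim 0 f : X → N) : l.Germ N) :=
  rfl

theorem germPullback_ext {S T : Module.End k (l.Germ N)}
    (h : ∀ f : X → N, S (f : l.Germ N) = T (f : l.Germ N)) : S = T :=
  LinearMap.ext fun F => F.inductionOn h

theorem germPullback_congr (hφ : PreservesGerms l φ) (hψ : PreservesGerms l ψ) (h : φ =ᶠ[l] ψ) :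
    germPullback k N hφ = germPullback k N hψ :=
  germPullback_ext fun _ => Germ.coe_eq.2 (h.mono fun _ hx => congrArg (Option.elim · 0 _) hx)

theorem germPullback_mul (hφ : PreservesGerms l φ) (hψ : PreservesGerms l ψ) :
    germPullback k N hφ * germPullback k N hψ = germPullback k N (hφ.bind hψ) :=
  germPullback_ext fun _ => Germ.coe_eq.2 (.of_forall fun x => by cases h : φ x <;> simp [h])

theorem germPullback_eq_zero (hφ : PreservesGerms l φ) (h : ∀ᶠ x in l, φ x = none) :
    germPullback k N hφ = 0 :=
  germPullback_ext fun _ => Germ.coe_eq.2 (h.mono fun _ hx => congrArg (Option.elim · 0 _) hx)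

theorem sum_germPullback_coe (s : Finset ι) {φ : ι → X → Option X}
    (hφ : ∀ i, PreservesGerms l (φ i)) (f : X → N) :
    (∑ i ∈ s, germPullback k N (hφ i)) (f : l.Germ N) =
      ((fun x => ∑ i ∈ s, (φ i x).elim 0 f : X → N) : l.Germ N) := by
  simp only [LinearMap.sum_apply, germPullback_coe]
  refine (map_sum (Germ.coeAddHom (M := N) l) _ s).symm.trans (congrArg _ (funext fun x => ?_))
  exact Finset.sum_apply ..

end GermPullback

section DeepPath

open Filter

variable {Q : FinQuiver}

variable (Q) in
/-- `w` is a path of `Q` starting at `u` that has length at least `n` or ends at a sink. -/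
def IsDeepPath : ℕ → Q.V → List Q.A → Prop
  | n, u, [] => n = 0 ∨ IsSink Q u
  | n, u, e :: w => Q.src e = u ∧ IsDeepPath (n - 1) (Q.tgt e) w

theorem IsDeepPath.mono {m n : ℕ} (hmn : m ≤ n) {u : Q.V} {w : List Q.A}
    (hw : IsDeepPath Q n u w) : IsDeepPath Q m u w := by
  induction w generalizing m n u with
  | nil => exact hw.imp_left fun hn => by omega
  | cons e w ih => exact ⟨hw.1, ih (Nat.sub_le_sub_right hmn 1) hw.2⟩

variable (Q) in
/-- The filter generated by the sets `{(u, w) | IsDeepPath Q n u w}`: the trace on the paths of `Q`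
of the neighbourhoods of its boundary (the infinite paths and the paths ending at a sink). -/
def deepPaths : Filter (Q.V × List Q.A) :=
  ⨅ n, 𝓟 {x | IsDeepPath Q n x.1 x.2}

theorem hasBasis_deepPaths :
    (deepPaths Q).HasBasis (fun _ => True) fun n => {x | IsDeepPath Q n x.1 x.2} :=
  hasBasis_iInf_principal (directed_of_isDirected_le fun _ _ hmn _ hx => hx.mono hmn)

theorem preservesGerms_deepPaths {φ : Q.V × List Q.A → Option (Q.V × List Q.A)}
    (h : ∀ n x, IsDeepPath Q (n + 1) x.1 x.2 → ∀ y ∈ φ x, IsDeepPath Q n y.1 y.2) :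
    PreservesGerms (deepPaths Q) φ := by
  intro s hs
  obtain ⟨n, -, hn⟩ := hasBasis_deepPaths.mem_iff.1 (mem_sup.1 hs).1
  refine hasBasis_deepPaths.mem_iff.2 ⟨n + 1, trivial, fun x hx => ?_⟩
  change φ x ∈ s
  cases hφ : φ x with
  | none => exact (mem_sup.1 hs).2
  | some y => exact hn (h n x hx y hφ)

/-- The partial identity on pairs `(u, w)` with `u = v`, which represents `p_v`. -/
def vertexMap (v : Q.V) (x : Q.V × List Q.A) : Option (Q.V × List Q.A) :=
  if x.1 = v then some x else none

/-- Prepending `e` to a path starting at the target of `e`, which represents `ē`. -/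
def ghostMap (e : Q.A) (x : Q.V × List Q.A) : Option (Q.V × List Q.A) :=
  if x.1 = Q.tgt e then some (Q.src e, e :: x.2) else none

/-- Removing the first arrow `e` from a path, which represents `e`. -/
def edgeMap (e : Q.A) : Q.V × List Q.A → Option (Q.V × List Q.A)
  | (_, []) => none
  | (u, a :: w) => if a = e ∧ u = Q.src e then some (Q.tgt e, w) else none

theorem preservesGerms_vertexMap (v : Q.V) : PreservesGerms (deepPaths Q) (vertexMap v) :=
  preservesGerms_deepPaths fun n x hx y hy => by
    obtain ⟨-, hy⟩ := Option.ite_none_right_eq_some.1 hy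
    cases hy
    exact hx.mono n.le_succ

theorem preservesGerms_ghostMap (e : Q.A) : PreservesGerms (deepPaths Q) (ghostMap e) :=
  preservesGerms_deepPaths fun n x hx y hy => by
    obtain ⟨hu, hy⟩ := Option.ite_none_right_eq_some.1 hy
    cases hy
    exact ⟨rfl, hu ▸ hx.mono (by omega)⟩

theorem preservesGerms_edgeMap (e : Q.A) : PreservesGerms (deepPaths Q) (edgeMap e) :=
  preservesGerms_deepPaths fun n x hx y hy => by
    obtain ⟨u, _ | ⟨a, w⟩⟩ := x
    · cases hy
    · obtain ⟨⟨rfl, -⟩, hy⟩ := Option.ite_none_right_eq_some.1 hy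
      cases hy
      exact hx.2

theorem vertexMap_bind_vertexMap (v w : Q.V) (x : Q.V × List Q.A) :
    (vertexMap v x).bind (vertexMap w) = if v = w then vertexMap v x else none := by
  grind [vertexMap]

theorem vertexMap_bind_edgeMap (e : Q.A) (x : Q.V × List Q.A) :
    (vertexMap (Q.src e) x).bind (edgeMap e) = edgeMap e x := by
  obtain ⟨u, _ | ⟨a, w⟩⟩ := x <;> grind [vertexMap, edgeMap]

theorem edgeMap_bind_vertexMap (e : Q.A) (x : Q.V × List Q.A) :
    (edgeMap e x).bind (vertexMap (Q.tgt e)) = edgeMap e x := by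
  obtain ⟨u, _ | ⟨a, w⟩⟩ := x <;> grind [vertexMap, edgeMap]

theorem vertexMap_bind_ghostMap (e : Q.A) (x : Q.V × List Q.A) :
    (vertexMap (Q.tgt e) x).bind (ghostMap e) = ghostMap e x := by
  grind [vertexMap, ghostMap]

theorem ghostMap_bind_vertexMap (e : Q.A) (x : Q.V × List Q.A) :
    (ghostMap e x).bind (vertexMap (Q.src e)) = ghostMap e x := by
  grind [vertexMap, ghostMap]

theorem ghostMap_bind_edgeMap (e f : Q.A) (x : Q.V × List Q.A) :
    (ghostMap e x).bind (edgeMap f) = if e = f then vertexMap (Q.tgt e) x else none := by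
  grind [vertexMap, ghostMap, edgeMap]

theorem sum_vertexMap_elim {N : Type*} [AddCommMonoid N] (f : Q.V × List Q.A → N)
    (x : Q.V × List Q.A) : ∑ v, (vertexMap v x).elim 0 f = f x := by
  simp [vertexMap, apply_ite (Option.elim · 0 f)]

theorem sum_edgeMap_bind_ghostMap_elim {N : Type*} [AddCommMonoid N] (f : Q.V × List Q.A → N)
    {v : Q.V} (hv : ¬ IsSink Q v) {x : Q.V × List Q.A} (hx : IsDeepPath Q 1 x.1 x.2) :
    ∑ e with Q.src e = v, ((edgeMap e x).bind (ghostMap e)).elim 0 f =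
      (vertexMap v x).elim 0 f := by
  obtain ⟨u, _ | ⟨a, w⟩⟩ := x
  · have hu : IsSink Q u := hx.resolve_left one_ne_zero
    have huv : u ≠ v := fun h => hv (h ▸ hu)
    simp [edgeMap, vertexMap, huv]
  · obtain rfl : Q.src a = u := hx.1
    rw [Finset.sum_filter, Finset.sum_eq_single a]
    · grind [edgeMap, vertexMap, ghostMap]
    · grind [edgeMap]
    · simp

end DeepPath

section GermRepresentation

open Filter

variable (k : Type) [CommRing k] (Q : FinQuiver)

variable (N : Type*) [AddCommGroup N] [Module k N]

/-- The action of the generators of `L_k(E)` on germs of `N`-valued functions of deep paths, by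
pullback along `vertexMap`, `edgeMap` and `ghostMap`. -/
noncomputable def germGen : LGen Q → Module.End k ((deepPaths Q).Germ N)
  | .vertex v => germPullback k N (preservesGerms_vertexMap v)
  | .edge e => germPullback k N (preservesGerms_edgeMap e)
  | .ghost e => germPullback k N (preservesGerms_ghostMap e)

theorem lift_germGen_eq_of_leavittRel {x y : FreeAlgebra k (LGen Q)} (h : LeavittRel k Q x y) :
    FreeAlgebra.lift k (germGen k Q N) x = FreeAlgebra.lift k (germGen k Q N) y := by
  induction h <;>
    simp only [map_mul, map_sum, map_zero, map_one, FreeAlgebra.lift_ι_apply, germGen,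
      germPullback_mul]
  case vertex_mul_self v =>
    exact germPullback_congr _ _
      (.of_forall fun x => (vertexMap_bind_vertexMap v v x).trans (if_pos rfl))
  case vertex_mul_ne v w hvw =>
    exact germPullback_eq_zero _
      (.of_forall fun x => (vertexMap_bind_vertexMap v w x).trans (if_neg hvw))
  case sum_vertex =>
    refine germPullback_ext fun f => ?_
    simp only [sum_germPullback_coe, sum_vertexMap_elim, Module.End.one_apply]
  case src_mul e => exact germPullback_congr _ _ (.of_forall (vertexMap_bind_edgeMap e))
  case mul_tgt e => exact germPullback_congr _ _ (.of_forall (edgeMap_bind_vertexMap e))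
  case tgt_mul_ghost e => exact germPullback_congr _ _ (.of_forall (vertexMap_bind_ghostMap e))
  case ghost_mul_src e => exact germPullback_congr _ _ (.of_forall (ghostMap_bind_vertexMap e))
  case ghost_mul_edge_self e =>
    exact germPullback_congr _ _
      (.of_forall fun x => (ghostMap_bind_edgeMap e e x).trans (if_pos rfl))
  case ghost_mul_edge_ne e f hef =>
    exact germPullback_eq_zero _
      (.of_forall fun x => (ghostMap_bind_edgeMap e f x).trans (if_neg hef))
  case cuntz_krieger v hv =>
    refine germPullback_ext fun f => ?_
    rw [sum_germPullback_coe]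
    exact Germ.coe_eq.2 (hasBasis_deepPaths.eventually_iff.2 ⟨1, trivial, fun x hx =>
      sum_edgeMap_bind_ghostMap_elim f (fun sink => hv.elim sink) hx⟩)

/-- The representation of `L_k(E)` on germs of `N`-valued functions of deep paths. -/
noncomputable def germRep : Leavitt k Q →ₐ[k] Module.End k ((deepPaths Q).Germ N) :=
  RingQuot.liftAlgHom k
    ⟨FreeAlgebra.lift k (germGen k Q N), fun _ _ => lift_germGen_eq_of_leavittRel k Q N⟩

variable {k Q}

theorem revToLeavitt_ghostVertex (v : Q.V) :
    revToLeavitt k Q (ghostVertex k Q v) = Leavitt.p k Q v :=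
  (RingQuot.liftAlgHom_mkAlgHom_apply ..).trans (FreeAlgebra.lift_ι_apply ..)

theorem revToLeavitt_ghost (e : Q.A) : revToLeavitt k Q (ghost k Q e) = Leavitt.gh k Q e :=
  (RingQuot.liftAlgHom_mkAlgHom_apply ..).trans (FreeAlgebra.lift_ι_apply ..)

variable {N}

theorem germRep_p (v : Q.V) :
    germRep k Q N (Leavitt.p k Q v) = germPullback k N (preservesGerms_vertexMap v) :=
  (RingQuot.liftAlgHom_mkAlgHom_apply ..).trans (FreeAlgebra.lift_ι_apply ..)

theorem germRep_gh (e : Q.A) :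
    germRep k Q N (Leavitt.gh k Q e) = germPullback k N (preservesGerms_ghostMap e) :=
  (RingQuot.liftAlgHom_mkAlgHom_apply ..).trans (FreeAlgebra.lift_ι_apply ..)

variable (k) in
/-- The element of `P_k(Ē)` given by the inverse of the path `w` starting at `u`. -/
noncomputable def ghostPath : Q.V → List Q.A → PathAlg k Q.rev
  | u, [] => ghostVertex k Q u
  | u, e :: w => ghostPath (Q.tgt e) w * ghost k Q e * ghostVertex k Q u

theorem ghostPath_mul_ghostVertex (u v : Q.V) (w : List Q.A) :
    ghostPath k u w * ghostVertex k Q v = if u = v then ghostPath k u w else 0 := by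
  cases w <;> simp only [ghostPath, mul_assoc, ghostVertex_mul_ghostVertex, mul_ite, mul_zero]

theorem ghostPath_mul_ghost (u : Q.V) (w : List Q.A) (e : Q.A) :
    ghostPath k u w * ghost k Q e =
      if u = Q.tgt e then ghostPath k (Q.src e) (e :: w) else 0 := by
  rw [← ghostVertex_tgt_mul_ghost, ← mul_assoc, ghostPath_mul_ghostVertex, ite_mul, zero_mul]
  refine ite_congr rfl (fun hu => ?_) fun _ => rfl
  rw [hu, ghostPath, mul_assoc, ghost_mul_ghostVertex_src]

variable [Module (PathAlg k Q.rev) N] [IsScalarTower k (PathAlg k Q.rev) N]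

variable (k Q N) in
/-- The map sending `a` to the germ of the function `w ↦ w̄ • a` of deep paths. -/
noncomputable def pathGerm : N →ₗ[k] (deepPaths Q).Germ N where
  toFun a := ((fun x => ghostPath k x.1 x.2 • a : Q.V × List Q.A → N) : (deepPaths Q).Germ N)
  map_add' a b := Germ.coe_eq.2 (.of_forall fun _ => smul_add _ a b)
  map_smul' c a := Germ.coe_eq.2 (.of_forall fun _ => smul_algebra_smul_comm c _ a)

theorem pathGerm_smul (r : PathAlg k Q.rev) (a : N) :
    pathGerm k Q N (r • a) = germRep k Q N (revToLeavitt k Q r) (pathGerm k Q N a) := by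
  induction r using PathAlg.rev_induction generalizing a with
  | algebraMap c => rw [algebraMap_smul, map_smul, AlgHom.commutes, AlgHom.commutes]; rfl
  | vertex v =>
    rw [revToLeavitt_ghostVertex, germRep_p]
    refine Germ.coe_eq.2 (.of_forall fun x => ?_)
    change ghostPath k x.1 x.2 • ghostVertex k Q v • a = (vertexMap v x).elim 0 _
    rw [← mul_smul, ghostPath_mul_ghostVertex, vertexMap]
    split_ifs <;> simp
  | ghost e =>
    rw [revToLeavitt_ghost, germRep_gh]
    refine Germ.coe_eq.2 (.of_forall fun x => ?_)
    change ghostPath k x.1 x.2 • ghost k Q e • a = (ghostMap e x).elim 0 _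
    rw [← mul_smul, ghostPath_mul_ghost, ghostMap]
    split_ifs <;> simp
  | mul r s hr hs => rw [mul_smul, hr, hs, map_mul, map_mul, Module.End.mul_apply]
  | add r s hr hs => rw [add_smul, map_add, hr, hs, map_add, map_add, LinearMap.add_apply]

theorem exists_ghostPath_smul_eq_zero {M : Type} [AddCommGroup M] [Module (PathAlg k Q.rev) M]
    (hM : Subsingleton (TensorPhi (PathAlg k Q.rev) (Leavitt k Q) (revToLeavitt k Q).toRingHom M))
    (a : M) : ∃ n, ∀ u w, IsDeepPath Q n u w → ghostPath k u w • a = 0 := by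
  let _ : Module k M := Module.compHom M (algebraMap k (PathAlg k Q.rev))
  have _ : IsScalarTower k (PathAlg k Q.rev) M := .of_compHom ..
  let _ : Module (Leavitt k Q) ((deepPaths Q).Germ M) :=
    Module.compHom _ (germRep k Q M).toRingHom
  let j : M →ₛₗ[(revToLeavitt k Q).toRingHom] (deepPaths Q).Germ M :=
    { toFun := pathGerm k Q M
      map_add' := map_add _
      map_smul' := pathGerm_smul }
  have germ_eq_zero : pathGerm k Q M a = 0 := eq_zero_of_subsingleton_tensorPhi j a
  obtain ⟨n, -, hn⟩ := hasBasis_deepPaths.eventually_iff.1 (Germ.coe_eq.1 germ_eq_zero)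
  exact ⟨n, fun u w huw => hn (x := (u, w)) huw⟩

end GermRepresentation

section CokerSeries

open Relation Submodule

theorem reflTransGen_iff_exists_fin {α : Type*} {r : α → α → Prop} {a b : α} :
    ReflTransGen r a b ↔ ∃ (ℓ : ℕ) (c : Fin (ℓ + 1) → α), c 0 = a ∧ c (Fin.last ℓ) = b ∧
      ∀ i : Fin ℓ, r (c i.castSucc) (c i.succ) := by
  constructor
  · intro h
    induction h with
    | refl => exact ⟨0, fun _ => a, rfl, rfl, fun i => i.elim0⟩
    | @tail b d _ hbd ih =>
      obtain ⟨ℓ, c, rfl, rfl, hc⟩ := ih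
      refine ⟨ℓ + 1, Fin.snoc c d, Fin.snoc_castSucc (α := fun _ => α) d c 0,
        Fin.snoc_last (α := fun _ => α) d c, Fin.lastCases ?_ fun i => ?_⟩
      · rw [Fin.snoc_castSucc, Fin.succ_last, Fin.snoc_last]
        exact hbd
      · rw [Fin.snoc_castSucc, ← Fin.castSucc_succ, Fin.snoc_castSucc]
        exact hc i
  · rintro ⟨ℓ, c, rfl, rfl, hc⟩
    exact Fin.induction (motive := fun i => ReflTransGen r (c 0) (c i)) .refl
      (fun i hi => hi.tail (hc i)) (Fin.last ℓ)

variable {k : Type} {Q : FinQuiver} {M : Type*} [AddCommGroup M]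

section CommRing

variable [CommRing k] [Module (PathAlg k Q.rev) M]

variable (k Q) in
/-- A one-step extension of submodules with quotient `coker ν_v` for some non-sink `v`; the
composition series of `statement_13` are the chains of such steps. -/
def IsCokerStep (A B : Submodule (PathAlg k Q.rev) M) : Prop :=
  A < B ∧ ∃ v, ¬ IsSink Q v ∧
    Nonempty ((B ⧸ A.comap B.subtype) ≃ₗ[PathAlg k Q.rev] CokerNu k Q v)

variable (k Q) in
/-- `K` can be adjoined by a chain of coker steps to every submodule containing `J`. Unlike the
existence of a chain from `J` to `J ⊔ K`, this is stable under suprema. -/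
def CokerAttachable (J K : Submodule (PathAlg k Q.rev) M) : Prop :=
  ∀ N, J ≤ N → ReflTransGen (IsCokerStep k Q) N (N ⊔ K)

namespace CokerAttachable

variable {J K K' : Submodule (PathAlg k Q.rev) M}

theorem bot : CokerAttachable k Q J ⊥ := fun N _ => by
  rw [sup_bot_eq]

theorem trans (hJ : CokerAttachable k Q K J) (hK : CokerAttachable k Q (K ⊔ J) K') :
    CokerAttachable k Q K (J ⊔ K') := fun N hN => by
  rw [← sup_assoc]
  exact (hJ N hN).trans (hK _ (sup_le_sup_right hN J))

theorem mono {J' : Submodule (PathAlg k Q.rev) M} (hK : CokerAttachable k Q J K) (hJ : J ≤ J') :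
    CokerAttachable k Q J' K :=
  fun N hN => hK N (hJ.trans hN)

theorem sup (hK : CokerAttachable k Q J K) (hK' : CokerAttachable k Q J K') :
    CokerAttachable k Q J (K ⊔ K') :=
  hK.trans (hK'.mono le_sup_left)

theorem finset_sup {ι : Type*} {s : Finset ι} {f : ι → Submodule (PathAlg k Q.rev) M}
    (hf : ∀ i ∈ s, CokerAttachable k Q J (f i)) : CokerAttachable k Q J (s.sup f) :=
  Finset.sup_induction bot (fun _ hK _ hK' => hK.sup hK') hf

end CokerAttachable

theorem IsCokerStep.exists_isSocleVector_mkQ {A B : Submodule (PathAlg k Q.rev) M}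
    (hAB : IsCokerStep k Q A B) :
    ∃ v, ¬ IsSink Q v ∧ ∀ m ∈ B, IsSocleVector k Q v (A.mkQ m) := by
  obtain ⟨-, v, hv, ⟨equiv⟩⟩ := hAB
  refine ⟨v, hv, fun m hm => ?_⟩
  let z : B ⧸ A.comap B.subtype := mkQ _ ⟨m, hm⟩
  have hz := isSocleVector_cokerNu (equiv z)
  have vertex_smul : ghostVertex k Q v • z = z :=
    equiv.injective ((map_smul equiv _ z).trans hz.vertex_smul)
  have ghost_smul (e : Q.A) : ghost k Q e • z = 0 :=
    equiv.map_eq_zero_iff.1 ((map_smul equiv _ z).trans (hz.ghost_smul e))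
  exact
    { vertex_smul := (Submodule.Quotient.eq A).2
        ((Submodule.Quotient.eq (A.comap B.subtype)).1 vertex_smul)
      ghost_smul := fun e => (Submodule.Quotient.mk_eq_zero A).2
        ((Submodule.Quotient.mk_eq_zero (A.comap B.subtype)).1 (ghost_smul e)) }

theorem sup_span_ghostVertex_smul (a : M) :
    (Finset.univ.sup fun v => span (PathAlg k Q.rev) {ghostVertex k Q v • a}) = span _ {a} := by
  refine le_antisymm (Finset.sup_le fun v _ => span_singleton_smul_le _ _ a) ?_
  have sum_mem_sup : ∑ v, ghostVertex k Q v • a ∈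
      Finset.univ.sup fun v => span (PathAlg k Q.rev) {ghostVertex k Q v • a} :=
    sum_mem fun v hv => (span_singleton_le_iff_mem ..).1
      (Finset.le_sup (f := fun v => span _ {ghostVertex k Q v • a}) hv)
  rw [sum_ghostVertex_smul] at sum_mem_sup
  exact (span_singleton_le_iff_mem ..).2 sum_mem_sup

end CommRing

variable [Field k] [Module (PathAlg k Q.rev) M]

theorem IsCokerStep.isSimpleModule {A B : Submodule (PathAlg k Q.rev) M}
    (hAB : IsCokerStep k Q A B) : IsSimpleModule (PathAlg k Q.rev) (B ⧸ A.comap B.subtype) :=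
  let ⟨_, _, _, ⟨equiv⟩⟩ := hAB
  IsSimpleModule.congr equiv

theorem isCokerStep_sup_span_singleton {N : Submodule (PathAlg k Q.rev) M} {v : Q.V}
    (hv : ¬ IsSink Q v) {x : M} (hxN : x ∉ N) (hx : ghostVertex k Q v • x = x)
    (hghost : ∀ e, ghost k Q e • x ∈ N) : IsCokerStep k Q N (N ⊔ span _ {x}) := by
  set B := N ⊔ span (PathAlg k Q.rev) {x}
  have hxB : x ∈ B := mem_sup_right (mem_span_singleton_self x)
  let z : B ⧸ N.comap B.subtype := mkQ _ ⟨x, hxB⟩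
  have hz : IsSocleVector k Q v z :=
    { vertex_smul := congrArg (mkQ _) (Subtype.ext hx)
      ghost_smul := fun e => (Submodule.Quotient.mk_eq_zero (N.comap B.subtype)).2 (hghost e) }
  have hz₀ : z ≠ 0 := fun h => hxN ((Submodule.Quotient.mk_eq_zero (N.comap B.subtype)).1 h)
  have hspan : span (PathAlg k Q.rev) {z} = ⊤ := by
    refine eq_top_iff.2 fun t _ => ?_
    obtain ⟨⟨y, hy⟩, rfl⟩ := mkQ_surjective _ t
    obtain ⟨n, hn, _, hx', rfl⟩ := mem_sup.1 hy
    obtain ⟨r, rfl⟩ := mem_span_singleton.1 hx'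
    have mkQ_eq_zero : mkQ (N.comap B.subtype) ⟨n, mem_sup_left hn⟩ = 0 :=
      (Submodule.Quotient.mk_eq_zero (N.comap B.subtype)).2 hn
    have decomposition : (⟨n + r • x, hy⟩ : B) = ⟨n, mem_sup_left hn⟩ + r • ⟨x, hxB⟩ := rfl
    rw [decomposition, map_add, mkQ_eq_zero, zero_add, map_smul]
    exact smul_mem _ r (mem_span_singleton_self z)
  exact ⟨left_lt_sup.2 fun h => hxN ((span_singleton_le_iff_mem ..).1 h), v, hv,
    hz.nonempty_equiv_cokerNu hz₀ hspan⟩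

theorem cokerAttachable_span_singleton_of_vertex_smul {J : Submodule (PathAlg k Q.rev) M} {v : Q.V}
    (hv : ¬ IsSink Q v) {x : M} (hx : ghostVertex k Q v • x = x)
    (hghost : ∀ e, ghost k Q e • x ∈ J) : CokerAttachable k Q J (span _ {x}) := by
  intro N hN
  by_cases hxN : x ∈ N
  · rw [sup_eq_left.2 ((span_singleton_le_iff_mem ..).2 hxN)]
  · exact .single (isCokerStep_sup_span_singleton hv hxN hx fun e => hN (hghost e))

theorem cokerAttachable_span_singleton_of_ghost_smul_mem {J : Submodule (PathAlg k Q.rev) M} {a : M}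
    (hsink : ∀ v, IsSink Q v → ghostVertex k Q v • a = 0) (hghost : ∀ e, ghost k Q e • a ∈ J) :
    CokerAttachable k Q J (span _ {a}) := by
  rw [← sup_span_ghostVertex_smul]
  refine .finset_sup fun v _ => ?_
  by_cases hv : IsSink Q v
  · rw [hsink v hv, span_zero_singleton]
    exact .bot
  · refine cokerAttachable_span_singleton_of_vertex_smul hv ?_ fun e => ?_
    · rw [← mul_smul, ghostVertex_mul_self]
    · rw [← mul_smul, ghost_mul_ghostVertex]
      split_ifs
      · exact hghost e
      · rw [zero_smul]
        exact zero_mem J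

theorem cokerAttachable_span_singleton_of_ghostPath_smul {n : ℕ} {a : M}
    (ha : ∀ u w, IsDeepPath Q n u w → ghostPath k u w • a = 0) :
    CokerAttachable k Q ⊥ (span _ {a}) := by
  induction n generalizing a with
  | zero =>
    have a_eq_zero : a = 0 := by
      rw [← sum_ghostVertex_smul (k := k) (Q := Q) a]
      exact Finset.sum_eq_zero fun v _ => ha v [] (.inl rfl)
    rw [a_eq_zero, span_zero_singleton]
    exact .bot
  | succ n ih =>
    let J := Finset.univ.sup fun e => span (PathAlg k Q.rev) {ghost k Q e • a}
    have attachable_J : CokerAttachable k Q ⊥ J := by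
      refine .finset_sup fun e _ => ih fun u w huw => ?_
      rw [← mul_smul, ghostPath_mul_ghost]
      split_ifs with hu
      · exact ha _ _ ⟨rfl, hu ▸ huw⟩
      · exact zero_smul _ a
    have attachable_a : CokerAttachable k Q J (span _ {a}) :=
      cokerAttachable_span_singleton_of_ghost_smul_mem (fun v hv => ha v [] (.inr hv)) fun e =>
        (span_singleton_le_iff_mem ..).1
          (Finset.le_sup (f := fun e => span _ {ghost k Q e • a}) (Finset.mem_univ e))
    have J_le : J ≤ span _ {a} := Finset.sup_le fun e _ => span_singleton_smul_le _ _ a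
    rw [← sup_eq_right.2 J_le]
    exact attachable_J.trans (attachable_a.mono le_sup_right)

end CokerSeries

section Vanishing

open Relation

variable {k : Type} {Q : FinQuiver} {M : Type} [AddCommGroup M]

section CommRing

variable [CommRing k] [Module (PathAlg k Q.rev) M]

variable (k) in
theorem Leavitt.sum_ed_mul_gh {v : Q.V} (hv : ¬ IsSink Q v) :
    ∑ e with Q.src e = v, Leavitt.ed k Q e * Leavitt.gh k Q e = Leavitt.p k Q v := by
  have relation := Leavitt.mk_rel k Q (.cuntz_krieger v (by simpa [IsSink] using hv))
  rwa [map_sum, Finset.sum_congr rfl fun e _ => map_mul (Leavitt.mk k Q) _ _] at relation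

theorem IsCokerStep.le_ker_tensorUnit {A B : Submodule (PathAlg k Q.rev) M}
    (hAB : IsCokerStep k Q A B)
    (hA : A ≤ LinearMap.ker (tensorUnit (revToLeavitt k Q).toRingHom M)) :
    B ≤ LinearMap.ker (tensorUnit (revToLeavitt k Q).toRingHom M) := by
  obtain ⟨v, hv, hB⟩ := hAB.exists_isSocleVector_mkQ
  intro m hm
  have vertex_smul_sub_mem : ghostVertex k Q v • m - m ∈ A :=
    (Submodule.Quotient.eq A).1 (hB m hm).vertex_smul
  have ghost_smul_mem (e : Q.A) : ghost k Q e • m ∈ A :=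
    (Submodule.Quotient.mk_eq_zero A).1 ((hB m hm).ghost_smul e)
  let unit := tensorUnit (revToLeavitt k Q).toRingHom M
  have unit_eq : Leavitt.p k Q v • unit m = unit m := by
    rw [← revToLeavitt_ghostVertex, ← sub_eq_zero]
    refine Eq.trans ?_ (hA vertex_smul_sub_mem)
    rw [map_sub, LinearMap.map_smulₛₗ]
    rfl
  have gh_smul (e : Q.A) : Leavitt.gh k Q e • unit m = 0 := by
    rw [← revToLeavitt_ghost]
    exact (LinearMap.map_smulₛₗ unit _ m).symm.trans (hA (ghost_smul_mem e))
  change unit m = 0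
  rw [← unit_eq, ← Leavitt.sum_ed_mul_gh k hv, Finset.sum_smul]
  exact Finset.sum_eq_zero fun e _ => by rw [mul_smul, gh_smul, smul_zero]

end CommRing

theorem subsingleton_tensorPhi_iff_reflTransGen [Field k] [Module (PathAlg k Q.rev) M]
    [Module.Finite (PathAlg k Q.rev) M] :
    Subsingleton (TensorPhi (PathAlg k Q.rev) (Leavitt k Q) (revToLeavitt k Q).toRingHom M) ↔
      ReflTransGen (IsCokerStep k Q) (⊥ : Submodule (PathAlg k Q.rev) M) ⊤ := by
  constructor
  · intro hM
    have attachable_top : CokerAttachable k Q ⊥ (⊤ : Submodule (PathAlg k Q.rev) M) :=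
      Submodule.fg_induction (motive := fun N _ => CokerAttachable k Q ⊥ N)
        (fun a => let ⟨_, hn⟩ := exists_ghostPath_smul_eq_zero hM a
          cokerAttachable_span_singleton_of_ghostPath_smul hn)
        (fun _ _ _ _ hK hK' => hK.sup hK') _ Module.Finite.fg_top
    simpa only [bot_sup_eq] using attachable_top ⊥ le_rfl
  · intro chain
    rw [subsingleton_tensorPhi_iff, eq_top_iff]
    generalize (⊤ : Submodule (PathAlg k Q.rev) M) = N at chain ⊢
    induction chain with
    | refl => exact bot_le
    | tail _ hstep ih => exact hstep.le_ker_tensorUnit ih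

end Vanishing

end LPA

open LPA in
theorem statement_13_general (k : Type) [Field k] (Q : FinQuiver) (M : Type) [AddCommGroup M]
    [Module (PathAlg k Q.rev) M] [Module.Finite (PathAlg k Q.rev) M] :
    Subsingleton (TensorPhi (PathAlg k Q.rev) (Leavitt k Q) (revToLeavitt k Q).toRingHom M) ↔
      ∃ (ℓ : ℕ) (c : Fin (ℓ + 1) → Submodule (PathAlg k Q.rev) M), IsCompSeries ℓ c ∧
        ∀ i : Fin ℓ, ∃ v : Q.V, ¬ IsSink Q v ∧
          Nonempty (SeriesFactor c i ≃ₗ[PathAlg k Q.rev] CokerNu k Q v) := by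
  rw [subsingleton_tensorPhi_iff_reflTransGen, reflTransGen_iff_exists_fin]
  refine exists₂_congr fun ℓ c =>
    ⟨fun ⟨h₀, h₁, hstep⟩ => ?_, fun ⟨⟨h₀, h₁, hsimple⟩, hfactor⟩ => ?_⟩
  · exact ⟨⟨h₀, h₁, fun i => ⟨(hstep i).1, (hstep i).isSimpleModule⟩⟩, fun i => (hstep i).2⟩
  · exact ⟨h₀, h₁, fun i => ⟨(hsimple i).1, hfactor i⟩⟩

open LPA in
/-- A finitely presented left `P_k(Ē)`-module `M` of finite length satisfies
`L_k(E) ⊗_{P_k(Ē)} M = 0` if and only if all of its composition factors are isomorphic to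
modules in `{coker ν_i | i ∈ E⁰ not a sink}`. -/
theorem statement_13 (k : Type) [Field k] (Q : FinQuiver) (M : Type) [AddCommGroup M]
    [Module (PathAlg k Q.rev) M]
    (hfp : Module.FinitePresentation (PathAlg k Q.rev) M)
    (hfl : IsFiniteLength (PathAlg k Q.rev) M) :
    Subsingleton (TensorPhi (PathAlg k Q.rev) (Leavitt k Q) (revToLeavitt k Q).toRingHom M) ↔
      ∃ (ℓ : ℕ) (c : Fin (ℓ + 1) → Submodule (PathAlg k Q.rev) M), IsCompSeries ℓ c ∧
        ∀ i : Fin ℓ, ∃ v : Q.V, ¬ IsSink Q v ∧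
          Nonempty (SeriesFactor c i ≃ₗ[PathAlg k Q.rev] CokerNu k Q v) :=
  statement_13_general k Q M
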